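/- Let Ω ⊆ ℝ³ be open, α : Ω → ℍ(ℂ) a differentiable purely vectorial function, and u : Ω → ℍ(ℂ) twice differentiable with components u = u₀ + u₁e₁ + u₂e₂ + u₃e₃. Then on Ω: (D + M^α)(D − M^α)u = Σ_{k=0}^{3} (−Δu_k − α²u_k − (Dα^{(k)})u_k)·e_k, where α^{(0)} := α and α^{(k)} := e_k α ē_k = −e_k α e_k for k = 1,2,3. -/

import Mathlib

noncomputable section

abbrev HC := Quaternion ℂ

def e1 : HC := ⟨0, 1, 0, 0⟩
def e2 : HC := ⟨0, 0, 1, 0⟩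
def e3 : HC := ⟨0, 0, 0, 1⟩

def pd (k : Fin 3) (g : (Fin 3 → ℝ) → ℂ) (x : Fin 3 → ℝ) : ℂ :=
  fderiv ℝ g x (Pi.single k 1)

def lap (g : (Fin 3 → ℝ) → ℂ) (x : Fin 3 → ℝ) : ℂ :=
  pd 0 (pd 0 g) x + pd 1 (pd 1 g) x + pd 2 (pd 2 g) x

def pdq (k : Fin 3) (f : (Fin 3 → ℝ) → HC) (x : Fin 3 → ℝ) : HC :=
  ⟨pd k (fun y => (f y).re) x, pd k (fun y => (f y).imI) x,
   pd k (fun y => (f y).imJ) x, pd k (fun y => (f y).imK) x⟩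

def Dq (f : (Fin 3 → ℝ) → HC) (x : Fin 3 → ℝ) : HC :=
  e1 * pdq 0 f x + e2 * pdq 1 f x + e3 * pdq 2 f x

def lapq (f : (Fin 3 → ℝ) → HC) (x : Fin 3 → ℝ) : HC :=
  ⟨lap (fun y => (f y).re) x, lap (fun y => (f y).imI) x,
   lap (fun y => (f y).imJ) x, lap (fun y => (f y).imK) x⟩

def QDiffOn (f : (Fin 3 → ℝ) → HC) (Ω : Set (Fin 3 → ℝ)) : Prop :=
  DifferentiableOn ℝ (fun y => (f y).re) Ω ∧ DifferentiableOn ℝ (fun y => (f y).imI) Ω ∧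
  DifferentiableOn ℝ (fun y => (f y).imJ) Ω ∧ DifferentiableOn ℝ (fun y => (f y).imK) Ω

def QC2On (f : (Fin 3 → ℝ) → HC) (Ω : Set (Fin 3 → ℝ)) : Prop :=
  ContDiffOn ℝ 2 (fun y => (f y).re) Ω ∧ ContDiffOn ℝ 2 (fun y => (f y).imI) Ω ∧
  ContDiffOn ℝ 2 (fun y => (f y).imJ) Ω ∧ ContDiffOn ℝ 2 (fun y => (f y).imK) Ω


/-- Build a biquaternion from its four complex components. -/
def quat (a b c d : ℂ) : HC := ⟨a, b, c, d⟩

/-- The basis `e₀ = 1, e₁, e₂, e₃`. -/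
def ee : Fin 4 → HC := ![1, e1, e2, e3]

/-- The `k`-th complex component of a biquaternion. -/
def qc (k : Fin 4) (q : HC) : ℂ := ![q.re, q.imI, q.imJ, q.imK] k

/-- The involution `q^{(k)} = e_k q ē_k` (for `k = 0` this is the identity,
for `k = 1,2,3` it is `−e_k q e_k`). -/
def invol (k : Fin 4) (q : HC) : HC := if k = 0 then q else -(ee k * q * ee k)

/-!
Expanding, `(D + M^α)(D - M^α)u = D²u - D(uα) + (Du)α - uα²`, where `D² = -Δ` because partial
derivatives commute while the units anticommute. In the product rule
`D(uα) = (Du)α + ∑ⱼ eⱼ u ∂ⱼα`, expanding `u = ∑ₖ uₖeₖ` and moving `eₖ` to the right through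
`eₖq = q^{(k)}eₖ` turns the second term into `∑ₖ (Dα^{(k)}) uₖ eₖ`. Finally `α²` is a scalar for
purely vectorial `α`, so it can be moved to the left of `u`.
-/

open scoped Quaternion

attribute [simps] e1 e2 e3 pdq

section Algebra

theorem commute_mul_self_of_re_eq_zero {R : Type*} [CommRing R] {p : ℍ[R]}
    (hp : p.re = 0) (q : ℍ[R]) : Commute (p * p) q := by
  have hstar : star p = -p := by ext <;> simp [hp]
  have hsq : p * p = -((Quaternion.normSq p : R) : ℍ[R]) := by
    rw [← Quaternion.self_mul_star, hstar, mul_neg, neg_neg]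
  rw [hsq]
  exact Commute.neg_left (Quaternion.coe_commutes _ q)

theorem neg_mul_mul_mul_cancel {R : Type*} [Ring R] {e : R} (he : e * e = -1) (q : R) :
    -(e * q * e) * e = e * q := by
  rw [neg_mul, mul_assoc, he, mul_neg_one, neg_neg]

theorem sum_qc_mul_ee (q : HC) : ∑ k : Fin 4, (qc k q : HC) * ee k = q := by
  ext <;> simp [Fin.sum_univ_four, qc, ee]

theorem ee_mul_self {k : Fin 4} (hk : k ≠ 0) : ee k * ee k = -1 := by
  fin_cases k
  · exact absurd rfl hk
  all_goals ext <;> simp [ee]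

theorem ee_mul_eq_invol_mul_ee (k : Fin 4) (q : HC) : ee k * q = invol k q * ee k := by
  by_cases hk : k = 0
  · simp [hk, invol, ee]
  · rw [invol, if_neg hk, neg_mul_mul_mul_cancel (ee_mul_self hk)]

theorem mul_eq_sum_invol_mul (q p : HC) :
    q * p = ∑ k : Fin 4, invol k p * (qc k q : HC) * ee k := by
  calc q * p = ∑ k : Fin 4, (qc k q : HC) * ee k * p := by rw [← Finset.sum_mul, sum_qc_mul_ee]
    _ = ∑ k : Fin 4, invol k p * (qc k q : HC) * ee k := by
      refine Finset.sum_congr rfl fun k _ => ?_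
      rw [mul_assoc, ee_mul_eq_invol_mul_ee, ← mul_assoc, Quaternion.coe_commutes]

theorem units_mul_symmetric (a₀₀ a₁₁ a₂₂ a₀₁ a₀₂ a₁₂ : HC) :
    e1 * (e1 * a₀₀ + e2 * a₀₁ + e3 * a₀₂) + e2 * (e1 * a₀₁ + e2 * a₁₁ + e3 * a₁₂)
      + e3 * (e1 * a₀₂ + e2 * a₁₂ + e3 * a₂₂) = -(a₀₀ + a₁₁ + a₂₂) := by
  ext <;> simp <;> ring

end Algebra

section Differentiability

/-- Twice differentiability at a point: `f` is differentiable near `x` and its derivative is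
differentiable at `x`. The first condition is separate because `fderiv` takes the junk value `0`
where `f` is not differentiable. -/
structure TwiceDifferentiableAt {E F : Type*} [NormedAddCommGroup E] [NormedSpace ℝ E]
    [NormedAddCommGroup F] [NormedSpace ℝ F] (f : E → F) (x : E) : Prop where
  eventually_differentiableAt : ∀ᶠ y in nhds x, DifferentiableAt ℝ f y
  differentiableAt_fderiv : DifferentiableAt ℝ (fderiv ℝ f) x

/-- Componentwise differentiability of a biquaternionic function at a point, the pointwise
counterpart of `QDiffOn`. -/
structure QDiffAt (f : (Fin 3 → ℝ) → HC) (x : Fin 3 → ℝ) : Prop where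
  re : DifferentiableAt ℝ (fun y => (f y).re) x
  imI : DifferentiableAt ℝ (fun y => (f y).imI) x
  imJ : DifferentiableAt ℝ (fun y => (f y).imJ) x
  imK : DifferentiableAt ℝ (fun y => (f y).imK) x

/-- Componentwise twice differentiability of a biquaternionic function at a point, a pointwise
weakening of `QC2On`. -/
structure QTwiceDiffAt (f : (Fin 3 → ℝ) → HC) (x : Fin 3 → ℝ) : Prop where
  re : TwiceDifferentiableAt (fun y => (f y).re) x
  imI : TwiceDifferentiableAt (fun y => (f y).imI) x
  imJ : TwiceDifferentiableAt (fun y => (f y).imJ) x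
  imK : TwiceDifferentiableAt (fun y => (f y).imK) x

theorem TwiceDifferentiableAt.of_contDiffAt {E F : Type*} [NormedAddCommGroup E]
    [NormedSpace ℝ E] [NormedAddCommGroup F] [NormedSpace ℝ F] {f : E → F} {x : E}
    (hf : ContDiffAt ℝ 2 f x) : TwiceDifferentiableAt f x where
  eventually_differentiableAt :=
    (hf.eventually (by simp)).mono fun _ hy => hy.differentiableAt two_ne_zero
  differentiableAt_fderiv :=
    (hf.fderiv_right (m := 1) one_add_one_eq_two.le).differentiableAt one_ne_zero

theorem QDiffOn.qDiffAt {f : (Fin 3 → ℝ) → HC} {Ω : Set (Fin 3 → ℝ)} {x : Fin 3 → ℝ}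
    (hf : QDiffOn f Ω) (hΩ : Ω ∈ nhds x) : QDiffAt f x :=
  ⟨hf.1.differentiableAt hΩ, hf.2.1.differentiableAt hΩ, hf.2.2.1.differentiableAt hΩ,
    hf.2.2.2.differentiableAt hΩ⟩

theorem QC2On.qTwiceDiffAt {f : (Fin 3 → ℝ) → HC} {Ω : Set (Fin 3 → ℝ)} {x : Fin 3 → ℝ}
    (hf : QC2On f Ω) (hΩ : Ω ∈ nhds x) : QTwiceDiffAt f x :=
  ⟨.of_contDiffAt (hf.1.contDiffAt hΩ), .of_contDiffAt (hf.2.1.contDiffAt hΩ),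
    .of_contDiffAt (hf.2.2.1.contDiffAt hΩ), .of_contDiffAt (hf.2.2.2.contDiffAt hΩ)⟩

end Differentiability

section ScalarPartialDerivatives

variable {f g : (Fin 3 → ℝ) → ℂ} {x : Fin 3 → ℝ}

theorem pd_add (j : Fin 3) (hf : DifferentiableAt ℝ f x) (hg : DifferentiableAt ℝ g x) :
    pd j (fun y => f y + g y) x = pd j f x + pd j g x := by
  simp only [pd, fderiv_fun_add hf hg, add_apply]

theorem pd_sub (j : Fin 3) (hf : DifferentiableAt ℝ f x) (hg : DifferentiableAt ℝ g x) :
    pd j (fun y => f y - g y) x = pd j f x - pd j g x := by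
  simp only [pd, fderiv_fun_sub hf hg, sub_apply]

theorem pd_neg (j : Fin 3) (f : (Fin 3 → ℝ) → ℂ) (x : Fin 3 → ℝ) :
    pd j (fun y => -f y) x = -pd j f x := by
  simp only [pd, fderiv_fun_neg, neg_apply]

theorem pd_mul (j : Fin 3) (hf : DifferentiableAt ℝ f x) (hg : DifferentiableAt ℝ g x) :
    pd j (fun y => f y * g y) x = pd j f x * g x + f x * pd j g x := by
  simp [pd, fderiv_fun_mul hf hg, mul_comm, add_comm]

theorem pd_const (j : Fin 3) (c : ℂ) (x : Fin 3 → ℝ) : pd j (fun _ => c) x = 0 := by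
  simp [pd]

theorem differentiableAt_pd (j : Fin 3) (hf : DifferentiableAt ℝ (fderiv ℝ f) x) :
    DifferentiableAt ℝ (pd j f) x :=
  hf.clm_apply (differentiableAt_const _)

theorem pd_pd_eq_fderiv_fderiv (i j : Fin 3) (hf : DifferentiableAt ℝ (fderiv ℝ f) x) :
    pd i (pd j f) x = fderiv ℝ (fderiv ℝ f) x (Pi.single i 1) (Pi.single j 1) := by
  change fderiv ℝ (fun y => fderiv ℝ f y (Pi.single j 1)) x (Pi.single i 1) = _
  simp [fderiv_clm_apply hf (differentiableAt_const _)]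

theorem pd_comm (i j : Fin 3) (hf : TwiceDifferentiableAt f x) :
    pd i (pd j f) x = pd j (pd i f) x := by
  simp only [pd_pd_eq_fderiv_fderiv _ _ hf.differentiableAt_fderiv]
  exact second_derivative_symmetric_of_eventually
    (hf.eventually_differentiableAt.mono fun _ hy => hy.hasFDerivAt)
    hf.differentiableAt_fderiv.hasFDerivAt _ _

end ScalarPartialDerivatives

section BiquaternionicPartialDerivatives

variable {f g : (Fin 3 → ℝ) → HC} {x : Fin 3 → ℝ}

theorem QDiffAt.const (c : HC) (x : Fin 3 → ℝ) : QDiffAt (fun _ => c) x := by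
  constructor <;> fun_prop

theorem QDiffAt.add (hf : QDiffAt f x) (hg : QDiffAt g x) : QDiffAt (fun y => f y + g y) x :=
  ⟨hf.re.add hg.re, hf.imI.add hg.imI, hf.imJ.add hg.imJ, hf.imK.add hg.imK⟩

theorem QDiffAt.mul (hf : QDiffAt f x) (hg : QDiffAt g x) : QDiffAt (fun y => f y * g y) x := by
  obtain ⟨hf₀, hf₁, hf₂, hf₃⟩ := hf
  obtain ⟨hg₀, hg₁, hg₂, hg₃⟩ := hg
  constructor <;>
    simp only [Quaternion.re_mul, Quaternion.imI_mul, Quaternion.imJ_mul, Quaternion.imK_mul] <;>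
    fun_prop

theorem QTwiceDiffAt.qDiffAt (hf : QTwiceDiffAt f x) : QDiffAt f x :=
  ⟨hf.re.eventually_differentiableAt.self_of_nhds,
    hf.imI.eventually_differentiableAt.self_of_nhds,
    hf.imJ.eventually_differentiableAt.self_of_nhds,
    hf.imK.eventually_differentiableAt.self_of_nhds⟩

theorem QTwiceDiffAt.qDiffAt_pdq (hf : QTwiceDiffAt f x) (j : Fin 3) : QDiffAt (pdq j f) x :=
  ⟨differentiableAt_pd j hf.re.differentiableAt_fderiv,
    differentiableAt_pd j hf.imI.differentiableAt_fderiv,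
    differentiableAt_pd j hf.imJ.differentiableAt_fderiv,
    differentiableAt_pd j hf.imK.differentiableAt_fderiv⟩

theorem QTwiceDiffAt.qDiffAt_Dq (hf : QTwiceDiffAt f x) : QDiffAt (Dq f) x :=
  (((QDiffAt.const e1 x).mul (hf.qDiffAt_pdq 0)).add
    ((QDiffAt.const e2 x).mul (hf.qDiffAt_pdq 1))).add
    ((QDiffAt.const e3 x).mul (hf.qDiffAt_pdq 2))

theorem pdq_add (j : Fin 3) (hf : QDiffAt f x) (hg : QDiffAt g x) :
    pdq j (fun y => f y + g y) x = pdq j f x + pdq j g x := by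
  ext
  exacts [pd_add j hf.re hg.re, pd_add j hf.imI hg.imI, pd_add j hf.imJ hg.imJ,
    pd_add j hf.imK hg.imK]

theorem pdq_sub (j : Fin 3) (hf : QDiffAt f x) (hg : QDiffAt g x) :
    pdq j (fun y => f y - g y) x = pdq j f x - pdq j g x := by
  ext
  exacts [pd_sub j hf.re hg.re, pd_sub j hf.imI hg.imI, pd_sub j hf.imJ hg.imJ,
    pd_sub j hf.imK hg.imK]

theorem pdq_mul (j : Fin 3) (hf : QDiffAt f x) (hg : QDiffAt g x) :
    pdq j (fun y => f y * g y) x = pdq j f x * g x + f x * pdq j g x := by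
  obtain ⟨hf₀, hf₁, hf₂, hf₃⟩ := hf
  obtain ⟨hg₀, hg₁, hg₂, hg₃⟩ := hg
  ext <;>
    simp (disch := fun_prop) only [re_pdq, imI_pdq, imJ_pdq, imK_pdq, pd_add, pd_sub, pd_mul,
      Quaternion.re_add, Quaternion.imI_add, Quaternion.imJ_add, Quaternion.imK_add,
      Quaternion.re_mul, Quaternion.imI_mul, Quaternion.imJ_mul, Quaternion.imK_mul] <;>
    ring

theorem pdq_const (j : Fin 3) (c : HC) (x : Fin 3 → ℝ) : pdq j (fun _ => c) x = 0 := by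
  ext <;> exact pd_const j _ x

theorem pdq_const_mul (j : Fin 3) (c : HC) (hf : QDiffAt f x) :
    pdq j (fun y => c * f y) x = c * pdq j f x := by
  rw [pdq_mul j (.const c x) hf, pdq_const, zero_mul, zero_add]

theorem pdq_invol (j : Fin 3) (k : Fin 4) (f : (Fin 3 → ℝ) → HC) (x : Fin 3 → ℝ) :
    pdq j (fun y => invol k (f y)) x = invol k (pdq j f x) := by
  fin_cases k <;> ext <;> simp [invol, ee, pd_neg]

theorem pdq_comm (i j : Fin 3) (hf : QTwiceDiffAt f x) :
    pdq i (pdq j f) x = pdq j (pdq i f) x := by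
  ext
  exacts [pd_comm i j hf.re, pd_comm i j hf.imI, pd_comm i j hf.imJ, pd_comm i j hf.imK]

end BiquaternionicPartialDerivatives

section MoisilTheodoresco

variable {f g : (Fin 3 → ℝ) → HC} {x : Fin 3 → ℝ}

theorem Dq_sub (hf : QDiffAt f x) (hg : QDiffAt g x) :
    Dq (fun y => f y - g y) x = Dq f x - Dq g x := by
  simp only [Dq, pdq_sub _ hf hg, mul_sub]
  abel

theorem Dq_mul (hf : QDiffAt f x) (hg : QDiffAt g x) :
    Dq (fun y => f y * g y) x = Dq f x * g x +
      ∑ k : Fin 4, Dq (fun y => invol k (g y)) x * (qc k (f x) : HC) * ee k := by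
  have leibniz : Dq (fun y => f y * g y) x = Dq f x * g x +
      (e1 * (f x * pdq 0 g x) + e2 * (f x * pdq 1 g x) + e3 * (f x * pdq 2 g x)) := by
    simp only [Dq, pdq_mul _ hf hg]
    noncomm_ring
  rw [leibniz]
  simp only [mul_eq_sum_invol_mul (f x), Dq, pdq_invol, Finset.mul_sum, add_mul,
    Finset.sum_add_distrib, mul_assoc]

theorem pdq_Dq (j : Fin 3) (hf : QTwiceDiffAt f x) :
    pdq j (Dq f) x =
      e1 * pdq j (pdq 0 f) x + e2 * pdq j (pdq 1 f) x + e3 * pdq j (pdq 2 f) x := by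
  have hterm (c : HC) (i : Fin 3) : QDiffAt (fun y => c * pdq i f y) x :=
    (QDiffAt.const c x).mul (hf.qDiffAt_pdq i)
  change pdq j (fun y => e1 * pdq 0 f y + e2 * pdq 1 f y + e3 * pdq 2 f y) x = _
  rw [pdq_add j ((hterm e1 0).add (hterm e2 1)) (hterm e3 2), pdq_add j (hterm e1 0) (hterm e2 1)]
  simp only [pdq_const_mul j _ (hf.qDiffAt_pdq _)]

theorem lapq_eq_pdq_pdq (f : (Fin 3 → ℝ) → HC) (x : Fin 3 → ℝ) :
    lapq f x = pdq 0 (pdq 0 f) x + pdq 1 (pdq 1 f) x + pdq 2 (pdq 2 f) x := by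
  ext <;> rfl

theorem lapq_eq_sum_lap (f : (Fin 3 → ℝ) → HC) (x : Fin 3 → ℝ) :
    lapq f x = ∑ k : Fin 4, (lap (fun y => qc k (f y)) x : HC) * ee k := by
  have hqc (k : Fin 4) : qc k (lapq f x) = lap (fun y => qc k (f y)) x := by
    fin_cases k <;> rfl
  simp only [← hqc, sum_qc_mul_ee]

theorem Dq_Dq (hf : QTwiceDiffAt f x) : Dq (Dq f) x = -lapq f x := by
  rw [Dq, pdq_Dq 0 hf, pdq_Dq 1 hf, pdq_Dq 2 hf, pdq_comm 1 0 hf, pdq_comm 2 0 hf,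
    pdq_comm 2 1 hf, units_mul_symmetric, lapq_eq_pdq_pdq]

theorem Dq_add_mul_Dq_sub_mul {u α : (Fin 3 → ℝ) → HC} (hα : QDiffAt α x)
    (hu : QTwiceDiffAt u x) :
    Dq (fun y => Dq u y - u y * α y) x + (Dq u x - u x * α x) * α x =
      -lapq u x - u x * (α x * α x)
        - ∑ k : Fin 4, Dq (fun y => invol k (α y)) x * (qc k (u x) : HC) * ee k := by
  rw [Dq_sub hu.qDiffAt_Dq (hu.qDiffAt.mul hα), Dq_Dq hu, Dq_mul hu.qDiffAt hα,
    sub_mul, mul_assoc]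
  abel

end MoisilTheodoresco

theorem factorization_componentwise_general {α u : (Fin 3 → ℝ) → HC} {x : Fin 3 → ℝ}
    (hα : QDiffAt α x) (hαvec : (α x).re = 0) (hu : QTwiceDiffAt u x) :
    Dq (fun y => Dq u y - u y * α y) x + (Dq u x - u x * α x) * α x =
      ∑ k : Fin 4,
        (-((lap (fun y => qc k (u y)) x : ℂ) : HC)
          - α x * α x * ((qc k (u x) : ℂ) : HC)
          - Dq (fun y => invol k (α y)) x * ((qc k (u x) : ℂ) : HC)) * ee k := by
  have hsq : u x * (α x * α x) = ∑ k : Fin 4, α x * α x * (qc k (u x) : HC) * ee k := by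
    rw [← (commute_mul_self_of_re_eq_zero hαvec (u x)).eq]
    simp only [mul_assoc, ← Finset.mul_sum, sum_qc_mul_ee]
  rw [Dq_add_mul_Dq_sub_mul hα hu, lapq_eq_sum_lap, hsq]
  simp only [sub_mul, neg_mul, Finset.sum_sub_distrib, Finset.sum_neg_distrib]

/-- the componentwise factorization identity (fact):
`D_α D_{−α} u = Σ_k (−Δu_k − α²u_k − (Dα^{(k)})u_k) e_k` for purely vectorial `α`. -/
theorem factorization_componentwise
    (Ω : Set (Fin 3 → ℝ)) (hΩ : IsOpen Ω)
    (α : (Fin 3 → ℝ) → HC) (hα : QDiffOn α Ω)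
    (hαvec : ∀ x ∈ Ω, (α x).re = 0)
    (u : (Fin 3 → ℝ) → HC) (hu : QC2On u Ω) :
    ∀ x ∈ Ω,
      Dq (fun y => Dq u y - u y * α y) x + (Dq u x - u x * α x) * α x =
      ∑ k : Fin 4,
        (-((lap (fun y => qc k (u y)) x : ℂ) : HC)
          - α x * α x * ((qc k (u x) : ℂ) : HC)
          - Dq (fun y => invol k (α y)) x * ((qc k (u x) : ℂ) : HC)) * ee k := by
  intro x hx
  exact factorization_componentwise_general (hα.qDiffAt (hΩ.mem_nhds hx)) (hαvec x hx)
    (hu.qTwiceDiffAt (hΩ.mem_nhds hx))
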